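/- Let (μ₀, (w₁, w₂, w₃)) be an eigenpair of the limit spectral problem on the star graph. Suppose ν ∈ ℝ and twice continuously differentiable functions φ_i : [0, ℓ_i] → ℝ satisfy: −(h_i² φ_i′)′(x) − μ₀ h_i(x)² φ_i(x) = ν h_i(x)² w_i(x) on [0, ℓ_i]; φ_i(ℓ_i) = 0; φ₁(0) = φ₂(0) = φ₃(0); and Σ_{i=1}^{3} h_i(0)² φ_i′(0) = 0. Then ν = 0. If moreover w₁(0) ≠ 0 and Σ_{i=1}^{3} ∫₀^{ℓ_i} h_i(x)² φ_i(x) w_i(x) dx = 0, then φ_i is identically zero on [0, ℓ_i] for every i. -/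

import Mathlib

/-!
Let `-(p w')' + q w = 0` and `-(p φ')' + q φ = ν ρ w` on every edge. When the Lagrange identity
`(φ p w' - p φ' w)' = ν ρ w²` is integrated over each edge and the results are summed, the
Dirichlet conditions remove the terms at the outer ends, while continuity and the Kirchhoff
conditions remove those at the vertex, so `ν ∑ ∫ ρ w² = 0` and `ν = 0`. The Wronskian of `φ` and
`w` is then constant on every edge, and zero because both functions vanish at the outer end. If `w`
does not vanish at the vertex, `φ - c w`, with `c` the common ratio of the vertex values, has zero
Cauchy data there and is zero by uniqueness for the initial value problem. Orthogonality gives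
`c = 0`.
-/

open Set

/-- An eigenpair `(μ, (w₁, w₂, w₃))` of the limit spectral problem on the star
graph. -/
def IsLimitEigenpair (ℓ : Fin 3 → ℝ) (h : Fin 3 → ℝ → ℝ) (μ : ℝ)
    (w : Fin 3 → ℝ → ℝ) : Prop :=
  (∀ i, ContDiff ℝ 2 (w i)) ∧
  (∃ i, ∃ x ∈ Icc 0 (ℓ i), w i x ≠ 0) ∧
  (∀ i, ∀ x ∈ Icc 0 (ℓ i),
      deriv (fun t => (h i t) ^ 2 * deriv (w i) t) x = -μ * (h i x) ^ 2 * w i x) ∧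
  (∀ i, w i (ℓ i) = 0) ∧
  (w 0 0 = w 1 0 ∧ w 1 0 = w 2 0) ∧
  (∑ i, (h i 0) ^ 2 * deriv (w i) 0 = 0)

/-- `u` solves the Sturm–Liouville equation `-(p u')' + q u = f` on `[a, b]` and `v` is its flux
`p u'`. The equation is written as a first-order system for `(u, v)`, with one-sided derivatives at
the endpoints, so that `p` need not be differentiable; it is meant for `p` without zeros in
`[a, b]`. -/
structure IsSturmLiouvilleSolution (p q f : ℝ → ℝ) (a b : ℝ) (u v : ℝ → ℝ) : Prop where
  hasDerivWithinAt : ∀ x ∈ Icc a b, HasDerivWithinAt u (v x / p x) (Icc a b) x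
  hasDerivWithinAt_flux : ∀ x ∈ Icc a b, HasDerivWithinAt v (q x * u x - f x) (Icc a b) x

namespace IsSturmLiouvilleSolution

variable {p q f g u v w z : ℝ → ℝ} {a b : ℝ}

lemma of_contDiff (hp : Differentiable ℝ p) (hp0 : ∀ x ∈ Icc a b, p x ≠ 0) (hu : ContDiff ℝ 2 u)
    (hode : ∀ x ∈ Icc a b, -deriv (fun t ↦ p t * deriv u t) x + q x * u x = f x) :
    IsSturmLiouvilleSolution p q f a b u (fun x ↦ p x * deriv u x) where
  hasDerivWithinAt x hx := by
    rw [mul_div_cancel_left₀ _ (hp0 x hx)]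
    exact (hu.differentiable two_ne_zero x).hasDerivAt.hasDerivWithinAt
  hasDerivWithinAt_flux x hx := by
    have hflux : DifferentiableAt ℝ (fun t ↦ p t * deriv u t) x :=
      (hp x).mul (hu.differentiable_deriv_two x)
    exact (hflux.hasDerivAt.congr_deriv (by linarith [hode x hx])).hasDerivWithinAt

lemma continuousOn (hu : IsSturmLiouvilleSolution p q f a b u v) : ContinuousOn u (Icc a b) :=
  fun x hx ↦ (hu.hasDerivWithinAt x hx).continuousWithinAt

lemma continuousOn_flux (hu : IsSturmLiouvilleSolution p q f a b u v) : ContinuousOn v (Icc a b) :=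
  fun x hx ↦ (hu.hasDerivWithinAt_flux x hx).continuousWithinAt

lemma sub_const_mul (hu : IsSturmLiouvilleSolution p q f a b u v)
    (hw : IsSturmLiouvilleSolution p q g a b w z) (c : ℝ) :
    IsSturmLiouvilleSolution p q (fun x ↦ f x - c * g x) a b
      (fun x ↦ u x - c * w x) (fun x ↦ v x - c * z x) where
  hasDerivWithinAt x hx :=
    ((hu.hasDerivWithinAt x hx).sub ((hw.hasDerivWithinAt x hx).const_mul c)).congr_deriv (by ring)
  hasDerivWithinAt_flux x hx :=
    ((hu.hasDerivWithinAt_flux x hx).sub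
      ((hw.hasDerivWithinAt_flux x hx).const_mul c)).congr_deriv (by ring)

lemma hasDerivWithinAt_wronskian (hu : IsSturmLiouvilleSolution p q f a b u v)
    (hw : IsSturmLiouvilleSolution p q g a b w z) {x : ℝ} (hx : x ∈ Icc a b) :
    HasDerivWithinAt (fun t ↦ u t * z t - v t * w t) (f x * w x - u x * g x) (Icc a b) x :=
  (((hu.hasDerivWithinAt x hx).mul (hw.hasDerivWithinAt_flux x hx)).sub
    ((hu.hasDerivWithinAt_flux x hx).mul (hw.hasDerivWithinAt x hx))).congr_deriv (by ring)

lemma integral_eq_wronskian_sub (hu : IsSturmLiouvilleSolution p q f a b u v)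
    (hw : IsSturmLiouvilleSolution p q g a b w z) (hab : a ≤ b) (hf : ContinuousOn f (Icc a b))
    (hg : ContinuousOn g (Icc a b)) :
    ∫ x in a..b, (f x * w x - u x * g x) = (u b * z b - v b * w b) - (u a * z a - v a * w a) := by
  refine intervalIntegral.integral_eq_sub_of_hasDerivAt_of_le hab
    (fun x hx ↦ (hu.hasDerivWithinAt_wronskian hw hx).continuousWithinAt)
    (fun x hx ↦ (hu.hasDerivWithinAt_wronskian hw (Ioo_subset_Icc_self hx)).hasDerivAt
      (Icc_mem_nhds hx.1 hx.2))
    (ContinuousOn.intervalIntegrable_of_Icc hab ?_)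
  exact (hf.mul hw.continuousOn).sub (hu.continuousOn.mul hg)

lemma eqOn_zero_of_cauchy_data_eq_zero (hp : ContinuousOn p (Icc a b))
    (hp0 : ∀ x ∈ Icc a b, p x ≠ 0) (hq : ContinuousOn q (Icc a b))
    (hu : IsSturmLiouvilleSolution p q 0 a b u v) (hua : u a = 0) (hva : v a = 0) :
    EqOn u 0 (Icc a b) := by
  obtain ⟨K, hK⟩ := isCompact_Icc.exists_bound_of_continuousOn ((hp.inv₀ hp0).prodMk hq)
  have hderiv : ∀ x ∈ Ico a b,
      HasDerivWithinAt (fun t ↦ (u t, v t)) (((p x)⁻¹, q x) * (v x, u x)) (Ici x) x := by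
    intro x hx
    have hx' := Ico_subset_Icc_self hx
    have hcurve := (hu.hasDerivWithinAt x hx').prodMk (hu.hasDerivWithinAt_flux x hx')
    refine (hcurve.mono_of_mem_nhdsWithin (Icc_mem_nhdsGE_of_mem hx)).congr_deriv ?_
    ext <;> simp [div_eq_inv_mul]
  have hbound : ∀ x ∈ Ico a b, ‖((p x)⁻¹, q x) * (v x, u x)‖ ≤ K * ‖(u x, v x)‖ := by
    intro x hx
    calc ‖((p x)⁻¹, q x) * (v x, u x)‖ ≤ ‖((p x)⁻¹, q x)‖ * ‖(v x, u x)‖ := norm_mul_le _ _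
      _ = ‖((p x)⁻¹, q x)‖ * ‖(u x, v x)‖ := by simp only [Prod.norm_mk, max_comm]
      _ ≤ K * ‖(u x, v x)‖ := by gcongr; exact hK x (Ico_subset_Icc_self hx)
  intro x hx
  exact congrArg Prod.fst (eq_zero_of_abs_deriv_le_mul_abs_self_of_eq_zero_right
    (hu.continuousOn.prodMk hu.continuousOn_flux) hderiv (Prod.ext hua hva) hbound x hx)

lemma eqOn_div_mul_of_right_eq_zero (hp : ContinuousOn p (Icc a b))
    (hp0 : ∀ x ∈ Icc a b, p x ≠ 0) (hq : ContinuousOn q (Icc a b))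
    (hu : IsSturmLiouvilleSolution p q 0 a b u v) (hw : IsSturmLiouvilleSolution p q 0 a b w z)
    (hub : u b = 0) (hwb : w b = 0) (hwa : w a ≠ 0) :
    EqOn u (fun x ↦ u a / w a * w x) (Icc a b) := by
  intro x hx
  have hwronskian : u a * z a - v a * w a = 0 := by
    have hlagrange :=
      hu.integral_eq_wronskian_sub hw (hx.1.trans hx.2) continuousOn_const continuousOn_const
    simp only [Pi.zero_apply, zero_mul, mul_zero, sub_zero, intervalIntegral.integral_zero, hub,
      hwb] at hlagrange
    linarith
  have hdiff : IsSturmLiouvilleSolution p q 0 a b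
      (fun x ↦ u x - u a / w a * w x) (fun x ↦ v x - u a / w a * z x) := by
    simpa using! hu.sub_const_mul hw (u a / w a)
  refine sub_eq_zero.mp (hdiff.eqOn_zero_of_cauchy_data_eq_zero hp hp0 hq ?_ ?_ hx)
  · rw [div_mul_cancel₀ _ hwa, sub_self]
  · field_simp
    linarith

end IsSturmLiouvilleSolution

/-- `u` solves `-(p i * u i')' + q i * u i = f i` on every edge `[0, ℓ i]` of the star graph whose
edges are glued at `0`, with fluxes `v i = p i * u i'`, subject to the Dirichlet condition at the
outer ends and to continuity and the Kirchhoff condition at the vertex. -/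
structure IsStarGraphSolution {ι : Type*} [Fintype ι] (ℓ : ι → ℝ) (p q f u v : ι → ℝ → ℝ) :
    Prop where
  edge : ∀ i, IsSturmLiouvilleSolution (p i) (q i) (f i) 0 (ℓ i) (u i) (v i)
  dirichlet : ∀ i, u i (ℓ i) = 0
  vertex_eq : ∀ i j, u i 0 = u j 0
  kirchhoff : ∑ i, v i 0 = 0

section StarGraph

variable {ι : Type*} [Fintype ι] {ℓ : ι → ℝ} {p q f u v w z ρ : ι → ℝ → ℝ}

lemma IsStarGraphSolution.of_contDiff {h : ι → ℝ → ℝ} {μ : ℝ}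
    (hh : ∀ i, Differentiable ℝ (h i)) (hh0 : ∀ i, ∀ x ∈ Icc 0 (ℓ i), h i x ≠ 0)
    (hu : ∀ i, ContDiff ℝ 2 (u i))
    (hode : ∀ i, ∀ x ∈ Icc 0 (ℓ i),
      -deriv (fun t ↦ h i t ^ 2 * deriv (u i) t) x - μ * h i x ^ 2 * u i x = f i x)
    (hdirichlet : ∀ i, u i (ℓ i) = 0) (hvertex : ∀ i j, u i 0 = u j 0)
    (hkirchhoff : ∑ i, h i 0 ^ 2 * deriv (u i) 0 = 0) :
    IsStarGraphSolution ℓ (fun i x ↦ h i x ^ 2) (fun i x ↦ -μ * h i x ^ 2) f u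
      (fun i x ↦ h i x ^ 2 * deriv (u i) x) where
  edge i := .of_contDiff ((hh i).pow 2)
    (fun x hx ↦ pow_ne_zero 2 (hh0 i x hx)) (hu i) fun x hx ↦ by linarith [hode i x hx]
  dirichlet := hdirichlet
  vertex_eq := hvertex
  kirchhoff := hkirchhoff

lemma IsStarGraphSolution.sum_flux_mul_eq_zero (hu : IsStarGraphSolution ℓ p q f u v)
    (hw : ∀ i j, w i 0 = w j 0) : ∑ i, v i 0 * w i 0 = 0 := by
  rcases isEmpty_or_nonempty ι with _ | ⟨⟨j⟩⟩
  · exact Fintype.sum_empty _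
  · simp only [hw _ j, ← Finset.sum_mul, hu.kirchhoff, zero_mul]

lemma IsStarGraphSolution.sum_integral_mul_eq_zero (hu : IsStarGraphSolution ℓ p q f u v)
    (hw : IsStarGraphSolution ℓ p q 0 w z) (hℓ : ∀ i, 0 ≤ ℓ i)
    (hf : ∀ i, ContinuousOn (f i) (Icc 0 (ℓ i))) :
    ∑ i, ∫ x in 0..ℓ i, f i x * w i x = 0 := by
  have hedge (i) : ∫ x in 0..ℓ i, f i x * w i x = v i 0 * w i 0 - z i 0 * u i 0 := by
    have hlagrange := (hu.edge i).integral_eq_wronskian_sub (hw.edge i) (hℓ i) (hf i)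
      continuousOn_const
    simp only [Pi.zero_apply, mul_zero, zero_mul, sub_zero, hu.dirichlet, hw.dirichlet] at hlagrange
    linarith
  simp only [hedge, Finset.sum_sub_distrib, hu.sum_flux_mul_eq_zero hw.vertex_eq,
    hw.sum_flux_mul_eq_zero hu.vertex_eq, sub_zero]

lemma IsStarGraphSolution.exists_eqOn_const_mul (hp : ∀ i, ContinuousOn (p i) (Icc 0 (ℓ i)))
    (hp0 : ∀ i, ∀ x ∈ Icc 0 (ℓ i), p i x ≠ 0) (hq : ∀ i, ContinuousOn (q i) (Icc 0 (ℓ i)))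
    (hu : IsStarGraphSolution ℓ p q 0 u v) (hw : IsStarGraphSolution ℓ p q 0 w z)
    (hw0 : ∃ i, w i 0 ≠ 0) :
    ∃ c, ∀ i, EqOn (u i) (fun x ↦ c * w i x) (Icc 0 (ℓ i)) := by
  obtain ⟨j, hj⟩ := hw0
  refine ⟨u j 0 / w j 0, fun i ↦ ?_⟩
  rw [hu.vertex_eq j i, hw.vertex_eq j i]
  exact (hu.edge i).eqOn_div_mul_of_right_eq_zero (hp i) (hp0 i) (hq i) (hw.edge i)
    (hu.dirichlet i) (hw.dirichlet i) (hw.vertex_eq j i ▸ hj)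

lemma sum_integral_mul_sq_pos (hℓ : ∀ i, 0 < ℓ i) (hρ : ∀ i, ContinuousOn (ρ i) (Icc 0 (ℓ i)))
    (hρ0 : ∀ i, ∀ x ∈ Icc 0 (ℓ i), 0 < ρ i x) (hw : ∀ i, ContinuousOn (w i) (Icc 0 (ℓ i)))
    (hw0 : ∃ i, ∃ x ∈ Icc 0 (ℓ i), w i x ≠ 0) :
    0 < ∑ i, ∫ x in 0..ℓ i, ρ i x * w i x ^ 2 := by
  have hnonneg (i) : ∀ x ∈ Icc 0 (ℓ i), 0 ≤ ρ i x * w i x ^ 2 :=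
    fun x hx ↦ mul_nonneg (hρ0 i x hx).le (sq_nonneg _)
  obtain ⟨j, x, hx, hwx⟩ := hw0
  refine Finset.sum_pos' (fun i _ ↦ intervalIntegral.integral_nonneg (hℓ i).le (hnonneg i))
    ⟨j, Finset.mem_univ j, ?_⟩
  exact intervalIntegral.integral_pos (hℓ j) ((hρ j).mul ((hw j).pow 2))
    (fun x hx ↦ hnonneg j x (Ioc_subset_Icc_self hx))
    ⟨x, hx, mul_pos (hρ0 j x hx) (sq_pos_of_ne_zero hwx)⟩

theorem limit_fredholm_homogeneous_general (hℓ : ∀ i, 0 < ℓ i)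
    (hp : ∀ i, ContinuousOn (p i) (Icc 0 (ℓ i))) (hp0 : ∀ i, ∀ x ∈ Icc 0 (ℓ i), p i x ≠ 0)
    (hq : ∀ i, ContinuousOn (q i) (Icc 0 (ℓ i)))
    (hρ : ∀ i, ContinuousOn (ρ i) (Icc 0 (ℓ i))) (hρ0 : ∀ i, ∀ x ∈ Icc 0 (ℓ i), 0 < ρ i x)
    (hw : IsStarGraphSolution ℓ p q 0 w z) (hw0 : ∃ i, ∃ x ∈ Icc 0 (ℓ i), w i x ≠ 0) {ν : ℝ}
    (hu : IsStarGraphSolution ℓ p q (fun i x ↦ ν * ρ i x * w i x) u v) :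
    ν = 0 ∧ ((∃ i, w i 0 ≠ 0) → ∑ i, ∫ x in 0..ℓ i, ρ i x * u i x * w i x = 0 →
      ∀ i, EqOn (u i) 0 (Icc 0 (ℓ i))) := by
  have hwcont (i) : ContinuousOn (w i) (Icc 0 (ℓ i)) := (hw.edge i).continuousOn
  have hnorm := sum_integral_mul_sq_pos hℓ hρ hρ0 hwcont hw0
  obtain rfl : ν = 0 := by
    have hsolvable := hu.sum_integral_mul_eq_zero hw (fun i ↦ (hℓ i).le)
      fun i ↦ (continuousOn_const.mul (hρ i)).mul (hwcont i)
    have hmul : ν * ∑ i, ∫ x in 0..ℓ i, ρ i x * w i x ^ 2 = 0 := by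
      simpa only [Finset.mul_sum, ← intervalIntegral.integral_const_mul, sq, ← mul_assoc]
        using hsolvable
    exact (mul_eq_zero.mp hmul).resolve_right hnorm.ne'
  refine ⟨rfl, fun hvertex horth i x hx ↦ ?_⟩
  have hu0 : IsStarGraphSolution ℓ p q 0 u v := by simpa only [zero_mul] using! hu
  obtain ⟨c, hc⟩ := hu0.exists_eqOn_const_mul hp hp0 hq hw hvertex
  have hmul : c * ∑ i, ∫ x in 0..ℓ i, ρ i x * w i x ^ 2 = 0 := by
    rw [Finset.mul_sum]
    refine (Finset.sum_congr rfl fun i _ ↦ ?_).trans horth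
    rw [← intervalIntegral.integral_const_mul]
    refine intervalIntegral.integral_congr fun x hx ↦ ?_
    rw [uIcc_of_le (hℓ i).le] at hx
    simp only [hc i hx]
    ring
  have hc0 : c = 0 := (mul_eq_zero.mp hmul).resolve_right hnorm.ne'
  simpa only [hc0, zero_mul] using! hc i hx

end StarGraph

lemma forall_eq_of_fin_three {α : Type*} {f : Fin 3 → α} (hf : f 0 = f 1 ∧ f 1 = f 2)
    (i j : Fin 3) : f i = f j := by
  have h0 (k : Fin 3) : f k = f 0 := by
    fin_cases k
    exacts [rfl, hf.1.symm, (hf.1.trans hf.2).symm]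
  rw [h0 i, h0 j]

lemma IsLimitEigenpair.isStarGraphSolution {ℓ : Fin 3 → ℝ} {h w : Fin 3 → ℝ → ℝ} {μ : ℝ}
    (hh : ∀ i, Differentiable ℝ (h i)) (hh0 : ∀ i, ∀ x ∈ Icc 0 (ℓ i), h i x ≠ 0)
    (hw : IsLimitEigenpair ℓ h μ w) :
    IsStarGraphSolution ℓ (fun i x ↦ h i x ^ 2) (fun i x ↦ -μ * h i x ^ 2) 0 w
      (fun i x ↦ h i x ^ 2 * deriv (w i) x) := by
  obtain ⟨hreg, -, hode, hdirichlet, hvertex, hkirchhoff⟩ := hw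
  refine .of_contDiff hh hh0 hreg (fun i x hx ↦ ?_) hdirichlet
    (forall_eq_of_fin_three (f := fun i ↦ w i 0) hvertex) hkirchhoff
  rw [hode i x hx, Pi.zero_apply, Pi.zero_apply]
  ring

/-- Homogeneous case of the Fredholm alternative for the limit spectral problem:
if `(φ₁, φ₂, φ₃)` solves the problem with right-hand sides `ν h_i² w_i` and zero
vertex flux, then `ν = 0`; if moreover the eigenfunction does not vanish at the
vertex and `φ` is orthogonal to `w`, then `φ` vanishes identically. -/
theorem limit_fredholm_homogeneous
    (ℓ : Fin 3 → ℝ) (h : Fin 3 → ℝ → ℝ)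
    (hℓ : ∀ i, 0 < ℓ i)
    (hh : ∀ i, ContDiff ℝ 1 (h i))
    (hhpos : ∀ i, ∀ x ∈ Icc 0 (ℓ i), 0 < h i x)
    (μ₀ : ℝ) (w : Fin 3 → ℝ → ℝ)
    (hw : IsLimitEigenpair ℓ h μ₀ w)
    (ν : ℝ) (φ : Fin 3 → ℝ → ℝ)
    (hφreg : ∀ i, ContDiff ℝ 2 (φ i))
    (hode : ∀ i, ∀ x ∈ Icc 0 (ℓ i),
      -(deriv (fun t => (h i t) ^ 2 * deriv (φ i) t) x) - μ₀ * (h i x) ^ 2 * φ i x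
        = ν * (h i x) ^ 2 * w i x)
    (hbc : ∀ i, φ i (ℓ i) = 0)
    (hvertex : φ 0 0 = φ 1 0 ∧ φ 1 0 = φ 2 0)
    (hkirchhoff : ∑ i, (h i 0) ^ 2 * deriv (φ i) 0 = 0) :
    ν = 0 ∧
      ((w 0 0 ≠ 0 ∧ (∑ i, ∫ x in (0 : ℝ)..(ℓ i), (h i x) ^ 2 * φ i x * w i x) = 0) →
        ∀ i, ∀ x ∈ Icc 0 (ℓ i), φ i x = 0) := by
  have hh0 (i) (x) (hx : x ∈ Icc 0 (ℓ i)) : h i x ≠ 0 := (hhpos i x hx).ne'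
  have hhdiff (i) : Differentiable ℝ (h i) := (hh i).differentiable one_ne_zero
  have hcont (i) : Continuous fun x ↦ h i x ^ 2 := (hh i).continuous.pow 2
  obtain ⟨hν, hzero⟩ := limit_fredholm_homogeneous_general hℓ (fun i ↦ (hcont i).continuousOn)
    (fun i x hx ↦ pow_ne_zero 2 (hh0 i x hx)) (fun i ↦ ((hcont i).const_mul _).continuousOn)
    (fun i ↦ (hcont i).continuousOn) (fun i x hx ↦ pow_pos (hhpos i x hx) 2)
    (hw.isStarGraphSolution hhdiff hh0) hw.2.1
    (.of_contDiff hhdiff hh0 hφreg hode hbc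
      (forall_eq_of_fin_three (f := fun i ↦ φ i 0) hvertex) hkirchhoff)
  exact ⟨hν, fun ⟨hw0, horth⟩ ↦ hzero ⟨0, hw0⟩ horth⟩
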